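/- arXiv:2312.17600 — 2 statements merged into one kernel-verified Lean document; each statement's English description precedes it below -/
import Mathlib

section
/- Let A be a unital C*-algebra over ℂ and let a, b ∈ A be self-adjoint. The element a + i·1 is invertible (since the spectrum of a is real). If 0 < ε < 1 and ‖(a + i·1)⁻¹(a − b)‖ ≤ ε, then the following operator inequalities between positive elements hold: (1 + b²)⁻¹ ≤ (1 − ε)⁻² (1 + a²)⁻¹ and (1 + a²)⁻¹ ≤ (1 + ε)² (1 + b²)⁻¹. -/
theorem rc_isUnit {A : Type*} [CStarAlgebra A] (a : A) (ha : IsSelfAdjoint a) :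
    IsUnit (a + Complex.I • (1 : A)) := by
  by_contra h
  have h1 : (-Complex.I) ∈ spectrum ℂ a := by
    rw [spectrum.mem_iff]
    intro h2
    apply h
    have h3 := h2.neg
    rw [Algebra.algebraMap_eq_smul_one] at h3
    convert h3 using 1
    rw [neg_smul]
    abel
  have h2 := ha.mem_spectrum_eq_re h1
  simp at h2

theorem rc_inverse {A : Type*} [CStarAlgebra A] (a : A) (ha : IsSelfAdjoint a) (u : Aˣ)
    (hu : (u : A) = a + Complex.I • (1 : A)) :
    Ring.inverse (1 + a ^ 2) = star ((u⁻¹ : Aˣ) : A) * ((u⁻¹ : Aˣ) : A) := by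
  have h1 : 1 + a ^ 2 = ((u * star u : Aˣ) : A) := by
    rw [Units.val_mul, Units.coe_star, hu]
    simp only [star_add, star_smul, star_one, ha.star_eq, RCLike.star_def, Complex.conj_I]
    simp only [mul_add, add_mul, smul_mul_assoc, mul_smul_comm, one_mul, mul_one, smul_add,
      neg_smul, mul_neg, smul_neg, pow_two]
    rw [smul_smul, Complex.I_mul_I, neg_smul, one_smul]
    abel
  rw [h1, Ring.inverse_unit, mul_inv_rev, Units.val_mul, ← Units.coe_star, star_inv]

theorem rc_conj {A : Type*} [CStarAlgebra A] [PartialOrder A] [StarOrderedRing A]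
    (w x : A) (r : ℝ) (h : ‖w‖ ≤ r) :
    star (w * x) * (w * x) ≤ (((r ^ 2 : ℝ) : ℂ)) • (star x * x) := by
  have h1 : star w * w ≤ algebraMap ℝ A (r ^ 2) :=
    CStarAlgebra.star_mul_le_algebraMap_norm_sq.trans
      (algebraMap_mono A (by gcongr))
  have h2 := star_left_conjugate_le_conjugate h1 x
  rw [Algebra.algebraMap_eq_smul_one, mul_smul_comm, mul_one, smul_mul_assoc] at h2
  rw [star_mul, Complex.coe_smul]
  simpa only [mul_assoc] using h2

/-- **Resolvent comparison inequalities** (from the proof of Proposition A.4, C*-algebra case).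
For self-adjoint `a, b` in a unital C*-algebra, the element `a + i·1` is invertible, and if
`0 < ε < 1` and `‖(a + i·1)⁻¹ * (a − b)‖ ≤ ε`, then
`(1 + b²)⁻¹ ≤ (1 − ε)⁻² (1 + a²)⁻¹` and `(1 + a²)⁻¹ ≤ (1 + ε)² (1 + b²)⁻¹`. -/
theorem resolvent_comparison_of_norm_le
    {A : Type*} [CStarAlgebra A] [PartialOrder A] [StarOrderedRing A]
    (a b : A) (ha : IsSelfAdjoint a) (hb : IsSelfAdjoint b)
    (ε : ℝ) (hε₀ : 0 < ε) (hε₁ : ε < 1)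
    (hnorm : ‖Ring.inverse (a + Complex.I • 1) * (a - b)‖ ≤ ε) :
    IsUnit (a + Complex.I • 1) ∧
    Ring.inverse (1 + b ^ 2) ≤ ((((1 - ε)⁻¹ ^ 2 : ℝ) : ℂ)) • Ring.inverse (1 + a ^ 2) ∧
    Ring.inverse (1 + a ^ 2) ≤ ((((1 + ε) ^ 2 : ℝ) : ℂ)) • Ring.inverse (1 + b ^ 2) := by
  refine ⟨rc_isUnit a ha, ?_⟩
  rcases subsingleton_or_nontrivial A with hA | hA
  · exact ⟨(Subsingleton.elim _ _).le, (Subsingleton.elim _ _).le⟩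
  obtain ⟨u, hu⟩ := rc_isUnit a ha
  obtain ⟨v, hv⟩ := rc_isUnit b hb
  rw [rc_inverse a ha u hu, rc_inverse b hb v hv]
  rw [← hu, Ring.inverse_unit] at hnorm
  set d : A := ((u⁻¹ : Aˣ) : A) * (a - b) with hd
  have hw : ((u⁻¹ * v : Aˣ) : A) = 1 - d := by
    have h1 : a - b = (u : A) - v := by rw [hu, hv]; abel
    rw [hd, h1, mul_sub, Units.inv_mul, Units.val_mul]
    abel
  have hn1 : ‖((u⁻¹ * v : Aˣ) : A)‖ ≤ 1 + ε := by
    rw [hw]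
    refine (norm_sub_le _ _).trans ?_
    rw [norm_one]
    linarith
  have hn2 : ‖((v⁻¹ * u : Aˣ) : A)‖ ≤ (1 - ε)⁻¹ := by
    have h1 : ((v⁻¹ * u : Aˣ) : A) = 1 + d * ((v⁻¹ * u : Aˣ) : A) := by
      have h2 : ((u⁻¹ * v : Aˣ) : A) * ((v⁻¹ * u : Aˣ) : A) = 1 := by
        rw [← Units.val_mul]; simp
      rw [hw, sub_mul, one_mul] at h2
      rw [← h2]; abel
    have h3 : ‖((v⁻¹ * u : Aˣ) : A)‖ ≤ 1 + ε * ‖((v⁻¹ * u : Aˣ) : A)‖ := by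
      calc _ = ‖1 + d * ((v⁻¹ * u : Aˣ) : A)‖ := by rw [← h1]
        _ ≤ ‖(1 : A)‖ + ‖d * ((v⁻¹ * u : Aˣ) : A)‖ := norm_add_le _ _
        _ ≤ 1 + ε * ‖((v⁻¹ * u : Aˣ) : A)‖ := by
          rw [norm_one]
          gcongr
          exact (norm_mul_le _ _).trans (by gcongr)
    rw [← one_div (1 - ε), le_div_iff₀ (by linarith)]
    linarith
  constructor
  · have := rc_conj _ ((u⁻¹ : Aˣ) : A) _ hn2
    rwa [← Units.val_mul, mul_inv_cancel_right] at this
  · have := rc_conj _ ((v⁻¹ : Aˣ) : A) _ hn1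
    rwa [← Units.val_mul, mul_inv_cancel_right] at this
end

section
/- Let A be a unital C*-algebra over ℂ and let a, b ∈ A be self-adjoint; the element a + i·1 is invertible since the spectrum of a is real. Suppose 0 < ε < 1/2, ‖(a − b)(a + i·1)⁻¹‖ ≤ ε and ‖(a + i·1)⁻¹(a − b)‖ ≤ ε. Then ‖F(a) − F(b)‖ ≤ 4ε, where F(x) := cfc m x is the bounded transform obtained by applying the continuous functional calculus to the function m(λ) = λ(1 + λ²)^{-1/2}. -/
/-- If `1 ≤ P` and `P X + X P ≤ 2 c P` then the spectrum of `X` lies below `c`. -/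
lemma bt_spectrum_le {A : Type*} [CStarAlgebra A] [PartialOrder A] [StarOrderedRing A]
    {X P : A} (hX : IsSelfAdjoint X) (hP : IsSelfAdjoint P) (hP1 : 1 ≤ P) {c : ℝ}
    (h : P * X + X * P ≤ (2 * c) • P) : ∀ x ∈ spectrum ℝ X, x ≤ c := by
  intro x hx
  by_contra! hlt
  apply hx
  have hδ : 0 < 2 * (x - c) := by linarith
  obtain ⟨t, ht0, ht⟩ : ∃ t : ℝ, 0 < t ∧ t * (2 * (x - c)) = ‖P‖ ^ 2 + 1 :=
    ⟨(‖P‖ ^ 2 + 1) / (2 * (x - c)), by positivity, by field_simp⟩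
  set W : A := algebraMap ℝ A x - X with hW
  have hWs : IsSelfAdjoint W := (IsSelfAdjoint.algebraMap A (.all x)).sub hX
  have h1 : (2 * (x - c)) • (1 : A) ≤ P * W + W * P := by
    have e : P * W + W * P = (2 * (x - c)) • P + ((2 * c) • P - (P * X + X * P)) := by
      simp only [hW, mul_sub, sub_mul, Algebra.algebraMap_eq_smul_one, mul_smul_comm,
        smul_mul_assoc, mul_one, one_mul]
      module
    rw [e]
    exact (smul_le_smul_of_nonneg_left hP1 hδ.le).trans
      (le_add_of_nonneg_right (sub_nonneg.2 h))
  have h2 : P * P ≤ (‖P‖ ^ 2) • (1 : A) := by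
    have := CStarAlgebra.star_mul_le_algebraMap_norm_sq (a := P)
    rwa [hP.star_eq, Algebra.algebraMap_eq_smul_one] at this
  have h3 : (0 : A) ≤ (t • W - P) * (t • W - P) := by
    have hs : IsSelfAdjoint (t • W - P) := ((IsSelfAdjoint.all t).smul hWs).sub hP
    have := star_mul_self_nonneg (t • W - P)
    rwa [hs.star_eq] at this
  have h4 : (1 : A) ≤ (t • W) * (t • W) := by
    have e : (t • W) * (t • W) - 1 = (t • W - P) * (t • W - P)
        + t • (P * W + W * P - (2 * (x - c)) • (1 : A)) + ((‖P‖ ^ 2) • (1 : A) - P * P) := by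
      have ht' : t • ((2 * (x - c)) • (1 : A)) = (‖P‖ ^ 2) • (1 : A) + 1 := by
        rw [smul_smul, ht, add_smul, one_smul]
      rw [smul_sub t _ ((2 * (x - c)) • (1 : A)), ht', sub_mul, mul_sub, mul_sub, smul_mul_assoc t W P,
        mul_smul_comm t P W, smul_add]
      abel
    rw [← sub_nonneg, e]
    exact add_nonneg (add_nonneg h3 (smul_nonneg ht0.le (sub_nonneg.2 h1))) (sub_nonneg.2 h2)
  have h5 : IsUnit ((t • W) * (t • W)) :=
    CStarAlgebra.isUnit_of_le 1 h4 ⟨zero_le_one, isUnit_one⟩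
  have h6 : IsUnit (t • W) := by
    rw [← pow_two] at h5
    exact (isUnit_pow_iff two_ne_zero).1 h5
  have h7 := h6.smul (Units.mk0 t⁻¹ (inv_ne_zero ht0.ne'))
  rwa [Units.smul_mk0, smul_smul, inv_mul_cancel₀ ht0.ne', one_smul] at h7

/-- Norm bound from the Lyapunov inequality. -/
lemma bt_norm_le {A : Type*} [CStarAlgebra A] [PartialOrder A] [StarOrderedRing A]
    {X P : A} (hX : IsSelfAdjoint X) (hP : IsSelfAdjoint P) (hP1 : 1 ≤ P) {c : ℝ} (hc : 0 ≤ c)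
    (h : P * X + X * P ≤ (2 * c) • P) (h' : -(P * X + X * P) ≤ (2 * c) • P) : ‖X‖ ≤ c := by
  have h1 := bt_spectrum_le hX hP hP1 h
  have h2 := bt_spectrum_le hX.neg hP hP1 (c := c)
    (by simpa only [mul_neg, neg_mul, ← neg_add] using h')
  rw [← cfc_id' ℝ X]
  refine norm_cfc_le hc fun x hx => ?_
  rw [Real.norm_eq_abs, abs_le]
  refine ⟨?_, h1 x hx⟩
  have := h2 (-x) (by rw [← spectrum.neg_eq]; simpa using hx)
  linarith

lemma bt_polar {A : Type*} [CStarAlgebra A] [PartialOrder A] [StarOrderedRing A]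
    {D K u v : A} (h1 : D ≤ K) (h2 : -D ≤ K) (hu : IsSelfAdjoint u) (hv : IsSelfAdjoint v) :
    u * D * v + v * D * u ≤ u * K * u + v * K * v := by
  have e : u * K * u + v * K * v - (u * D * v + v * D * u)
      = (1 / 2 : ℝ) • ((u + v) * (K - D) * (u + v) + (u - v) * (K - -D) * (u - v)) := by
    simp only [mul_sub, sub_mul, mul_add, add_mul, mul_neg, neg_mul]
    module
  rw [← sub_nonneg, e]
  refine smul_nonneg (by norm_num) (add_nonneg ?_ ?_)
  · simpa using (hu.add hv).conjugate_le_conjugate (sub_nonneg.2 h1)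
  · simpa using (hu.sub hv).conjugate_le_conjugate (sub_nonneg.2 h2)

/-- The algebraic relations of bounded transform `f`, weight `p` and its inverse `r`. -/
structure BTData {A : Type*} [CStarAlgebra A] [PartialOrder A] (a p r f : A) : Prop where
  sp : IsSelfAdjoint p
  sr : IsSelfAdjoint r
  sf : IsSelfAdjoint f
  one_le : 1 ≤ p
  pf : p * f = a
  fp : f * p = a
  pr : p * r = 1
  rp : r * p = 1
  ar : a * r = f
  ra : r * a = f
  fa : f * a = p - r
  af : a * f = p - r
  pp : p * p = 1 + a * a

lemma bt_data {A : Type*} [CStarAlgebra A] [PartialOrder A] [StarOrderedRing A]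
    (a : A) (ha : IsSelfAdjoint a) :
    BTData a (cfc (fun l : ℝ => Real.sqrt (1 + l ^ 2)) a)
      (cfc (fun l : ℝ => (Real.sqrt (1 + l ^ 2))⁻¹) a)
      (cfc (fun l : ℝ => l * (Real.sqrt (1 + l ^ 2))⁻¹) a) := by
  have hpos : ∀ l : ℝ, 0 < Real.sqrt (1 + l ^ 2) := fun l => Real.sqrt_pos.2 (by positivity)
  have hne : ∀ l : ℝ, Real.sqrt (1 + l ^ 2) ≠ 0 := fun l => (hpos l).ne'
  have hsq : ∀ l : ℝ, Real.sqrt (1 + l ^ 2) ^ 2 = 1 + l ^ 2 :=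
    fun l => Real.sq_sqrt (by positivity)
  have cp : Continuous (fun l : ℝ => Real.sqrt (1 + l ^ 2)) := by fun_prop
  have cr : Continuous (fun l : ℝ => (Real.sqrt (1 + l ^ 2))⁻¹) := cp.inv₀ hne
  have cf : Continuous (fun l : ℝ => l * (Real.sqrt (1 + l ^ 2))⁻¹) := continuous_id.mul cr
  have key : ∀ g h k : ℝ → ℝ, Continuous g → Continuous h → (∀ l, g l * h l = k l) →
      cfc g a * cfc h a = cfc k a := by
    intro g h k hg hh hk
    rw [← cfc_mul g h a hg.continuousOn hh.continuousOn]
    exact cfc_congr fun l _ => hk l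
  have hid : cfc (fun l : ℝ => l) a = a := cfc_id' ℝ a
  have hone : cfc (fun _ : ℝ => (1 : ℝ)) a = 1 := cfc_const_one ℝ a
  have hsub : cfc (fun l : ℝ => Real.sqrt (1 + l ^ 2)) a
      - cfc (fun l : ℝ => (Real.sqrt (1 + l ^ 2))⁻¹) a
      = cfc (fun l : ℝ => Real.sqrt (1 + l ^ 2) - (Real.sqrt (1 + l ^ 2))⁻¹) a :=
    (cfc_sub _ _ a cp.continuousOn cr.continuousOn).symm
  have hs : ∀ l : ℝ, l * (l * (Real.sqrt (1 + l ^ 2))⁻¹)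
      = Real.sqrt (1 + l ^ 2) - (Real.sqrt (1 + l ^ 2))⁻¹ := by
    intro l
    have := hne l
    field_simp
    rw [hsq l]; ring
  refine ⟨cfc_predicate _ a, cfc_predicate _ a, cfc_predicate _ a, ?_, ?_, ?_, ?_, ?_, ?_, ?_,
    ?_, ?_, ?_⟩
  · refine one_le_cfc _ a (fun l _ => ?_) cp.continuousOn
    exact Real.one_le_sqrt.2 (by nlinarith [sq_nonneg l])
  · refine (key _ _ _ cp cf fun l => ?_).trans hid
    have := hne l
    field_simp
  · refine (key _ _ _ cf cp fun l => ?_).trans hid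
    have := hne l
    field_simp
  · exact (key _ _ _ cp cr fun l => mul_inv_cancel₀ (hne l)).trans hone
  · exact (key _ _ _ cr cp fun l => inv_mul_cancel₀ (hne l)).trans hone
  · have := key _ _ _ continuous_id' cr fun l => rfl
    rwa [hid] at this
  · have := key _ _ _ cr continuous_id' fun l => mul_comm _ _
    rwa [hid] at this
  · have := key _ _ _ cf continuous_id' fun l => (mul_comm _ _).trans (hs l)
    rwa [hid, ← hsub] at this
  · have := key _ _ _ continuous_id' cf fun l => hs l
    rwa [hid, ← hsub] at this
  · have h1 := key _ _ (fun l : ℝ => 1 + l * l) cp cp fun l => by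
      rw [← pow_two, hsq l, pow_two]
    rw [h1, cfc_add a (fun _ : ℝ => (1 : ℝ)) (fun l : ℝ => l * l), hone,
      cfc_mul (fun l : ℝ => l) (fun l : ℝ => l) a, hid]

/-- The Sylvester identity. -/
lemma bt_sylvester {A : Type*} [CStarAlgebra A] [PartialOrder A]
    {a p r f b q s g : A} (h : BTData a p r f) (k : BTData b q s g) :
    p * (f - g) + (f - g) * q = (a - b) + r * (a - b) * s - f * (a - b) * g := by
  have e1 : r * (a - b) * s = f * s - r * g := by
    rw [mul_sub, sub_mul, h.ra, mul_assoc r b s, k.ar]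
  have e2 : f * (a - b) * g = (p - r) * g - f * (q - s) := by
    rw [mul_sub, sub_mul, h.fa, mul_assoc f b g, k.af]
  rw [e1, e2, mul_sub, sub_mul, h.pf, k.fp]
  simp only [mul_sub, sub_mul]
  abel

lemma bt_abs_le {A : Type*} [CStarAlgebra A] [PartialOrder A] [StarOrderedRing A]
    {D p : A} {c : ℝ} (hc : 0 ≤ c) (hD : IsSelfAdjoint D) (hp : 1 ≤ p)
    (h : D * D ≤ (c ^ 2) • (p * p)) : CFC.abs D ≤ c • p := by
  have h1 := CFC.sqrt_le_sqrt _ _ h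
  have hp0 : 0 ≤ c • p := smul_nonneg hc (zero_le_one.trans hp)
  rw [CFC.sqrt_unique (a := (c ^ 2) • (p * p)) (b := c • p) (by
    rw [smul_mul_smul_comm, pow_two]) hp0] at h1
  rwa [CFC.abs, hD.star_eq]

lemma bt_conj_sum {A : Type*} [CStarAlgebra A] [PartialOrder A] [StarOrderedRing A]
    {a p r f K : A} {c : ℝ} (h : BTData a p r f) (hK : K ≤ c • p) :
    r * K * r + f * K * f ≤ c • p := by
  have h1 := h.sr.conjugate_le_conjugate hK
  have h2 := h.sf.conjugate_le_conjugate hK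
  refine (add_le_add h1 h2).trans_eq ?_
  rw [mul_smul_comm, mul_smul_comm, smul_mul_assoc, smul_mul_assoc, h.rp, one_mul, h.fp, h.af,
    ← smul_add]
  congr 1
  abel

lemma bt_main {A : Type*} [CStarAlgebra A] [PartialOrder A] [StarOrderedRing A]
    {a p r f b q s g : A} (h : BTData a p r f) (k : BTData b q s g) (hD : IsSelfAdjoint (a - b))
    {c : ℝ} (hc : 0 ≤ c) (hp : CFC.abs (a - b) ≤ c • p) (hq : CFC.abs (a - b) ≤ c • q) :
    ‖f - g‖ ≤ c := by
  set D := a - b with hDdef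
  set K := CFC.abs D with hKdef
  have hX : IsSelfAdjoint (f - g) := h.sf.sub k.sf
  have h1 : D ≤ K := by
    rw [← sub_nonneg, CFC.abs_sub_self D hD]
    exact nsmul_nonneg (CFC.negPart_nonneg D) 2
  have h2 : -D ≤ K := by
    rw [← sub_nonneg, sub_neg_eq_add, CFC.abs_add_self D hD]
    exact nsmul_nonneg (CFC.posPart_nonneg D) 2
  have e1 := bt_sylvester h k
  have e2 : q * (f - g) + (f - g) * p = D + s * D * r - g * D * f := by
    have := congrArg star e1
    simp only [star_add, star_sub, star_mul, h.sp.star_eq, k.sp.star_eq, h.sf.star_eq,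
      k.sf.star_eq, h.sr.star_eq, k.sr.star_eq] at this
    have hD' : star a - star b = a - b := by rw [← star_sub]; exact hD.star_eq
    simp only [hD', ← mul_assoc] at this
    rw [← this, add_comm]
  have e : (p + q) * (f - g) + (f - g) * (p + q)
      = D + D + (r * D * s + s * D * r) - (f * D * g + g * D * f) := by
    have : (p + q) * (f - g) + (f - g) * (p + q)
      = (p * (f - g) + (f - g) * q) + (q * (f - g) + (f - g) * p) := by
      rw [add_mul, mul_add]; abel
    rw [this, e1, e2, ← hDdef]; abel
  have b1 := bt_polar h1 h2 h.sr k.sr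
  have b2 := bt_polar h1 h2 h.sf k.sf
  have h2' : -(-D) ≤ K := by rwa [neg_neg]
  have b1' := bt_polar h2 h2' h.sr k.sr
  have b2' := bt_polar h2 h2' h.sf k.sf
  have c1 := bt_conj_sum h hp
  have c2 := bt_conj_sum k hq
  have tot : (K + K) + ((r * K * r + s * K * s) + (f * K * f + g * K * g))
      ≤ (2 * c) • (p + q) := by
    have := add_le_add (add_le_add hp hq) (add_le_add c1 c2)
    calc _ = K + K + ((r * K * r + f * K * f) + (s * K * s + g * K * g)) := by abel
      _ ≤ _ := this
      _ = _ := by module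
  refine bt_norm_le hX (h.sp.add k.sp) ?_ hc ?_ ?_
  · exact h.one_le.trans (le_add_of_nonneg_right (zero_le_one.trans k.one_le))
  · rw [e]
    refine le_trans ?_ tot
    refine le_trans (le_of_eq ?_) (add_le_add (add_le_add h1 h1) (add_le_add b1 b2'))
    simp only [mul_neg, neg_mul]; abel
  · rw [e]
    refine le_trans ?_ tot
    refine le_trans (le_of_eq ?_) (add_le_add (add_le_add h2 h2) (add_le_add b1' b2))
    simp only [mul_neg, neg_mul]; abel

lemma bt_isUnit {A : Type*} [CStarAlgebra A] {a : A} (ha : IsSelfAdjoint a) :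
    IsUnit (a + Complex.I • (1 : A)) := by
  by_contra hn
  have hmem : -Complex.I ∈ spectrum ℂ a := by
    intro hu
    apply hn
    have := hu.neg
    rwa [neg_sub, Algebra.algebraMap_eq_smul_one, neg_smul, sub_neg_eq_add] at this
  have := ha.im_eq_zero_of_mem_spectrum hmem
  simp at this

lemma bt_sq_le {A : Type*} [CStarAlgebra A] [PartialOrder A] [StarOrderedRing A]
    {a D : A} (ha : IsSelfAdjoint a) (hD : IsSelfAdjoint D) {ε : ℝ}
    (h : ‖D * Ring.inverse (a + Complex.I • 1)‖ ≤ ε) :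
    D * D ≤ (ε ^ 2) • (1 + a * a) := by
  set z : A := a + Complex.I • 1 with hz
  have hu : IsUnit z := bt_isUnit ha
  have h1 : star (D * Ring.inverse z) * (D * Ring.inverse z) ≤ (ε ^ 2) • (1 : A) := by
    refine CStarAlgebra.star_mul_le_algebraMap_norm_sq.trans ?_
    rw [Algebra.algebraMap_eq_smul_one]
    exact smul_le_smul_of_nonneg_right (by gcongr) zero_le_one
  have h2 := star_left_conjugate_le_conjugate h1 z
  have e1 : star z * (star (D * Ring.inverse z) * (D * Ring.inverse z)) * z = D * D := by
    have : D * Ring.inverse z * z = D := by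
      rw [mul_assoc, Ring.inverse_mul_cancel z hu, mul_one]
    calc _ = star (D * Ring.inverse z * z) * (D * Ring.inverse z * z) := by
          simp only [star_mul, mul_assoc]
      _ = _ := by rw [this, hD.star_eq]
  have e2 : star z * z = 1 + a * a := by
    have hzs : star z = a - Complex.I • 1 := by
      rw [hz, star_add, star_smul, star_one, ha.star_eq, Complex.star_def, Complex.conj_I,
        neg_smul, sub_eq_add_neg]
    rw [hzs, hz, sub_mul, mul_add, smul_mul_assoc, one_mul, smul_add, smul_smul, Complex.I_mul_I,
      mul_smul_comm, mul_one, neg_smul, one_smul]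
    abel
  rw [e1] at h2
  rwa [mul_smul_comm, smul_mul_assoc, mul_one, e2] at h2

/-- **Quantitative estimate from the proof of Proposition A.4 (C*-algebra case).**
If `a, b` are self-adjoint elements of a unital C*-algebra, `0 < ε < 1/2`, and both
`‖(a − b)(a + i·1)⁻¹‖ ≤ ε` and `‖(a + i·1)⁻¹(a − b)‖ ≤ ε`, then the bounded transforms satisfy
`‖F(a) − F(b)‖ ≤ 4ε`, where `F(x) = cfc (fun λ => λ(1 + λ²)^(-1/2)) x`. -/
theorem norm_boundedTransform_sub_boundedTransform_le
    {A : Type*} [CStarAlgebra A] [PartialOrder A] [StarOrderedRing A]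
    (a b : A) (ha : IsSelfAdjoint a) (hb : IsSelfAdjoint b)
    (ε : ℝ) (hε₀ : 0 < ε) (hε₁ : ε < 1 / 2)
    (hnorm₁ : ‖(a - b) * Ring.inverse (a + Complex.I • 1)‖ ≤ ε)
    (hnorm₂ : ‖Ring.inverse (a + Complex.I • 1) * (a - b)‖ ≤ ε) :
    ‖cfc (fun l : ℝ => l * (Real.sqrt (1 + l ^ 2))⁻¹) a -
      cfc (fun l : ℝ => l * (Real.sqrt (1 + l ^ 2))⁻¹) b‖ ≤ 4 * ε := by
  have hD : IsSelfAdjoint (a - b) := ha.sub hb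
  have h := bt_data a ha
  have k := bt_data b hb
  have s1 := bt_sq_le ha hD hnorm₁
  have hE : ε ^ 2 ≤ 1 / 4 := by nlinarith
  have hDD : 0 ≤ (a - b) * (a - b) := by
    have := star_mul_self_nonneg (a - b)
    rwa [hD.star_eq] at this
  have hbb : 0 ≤ (b - (a - b)) * (b - (a - b)) := by
    have := star_mul_self_nonneg (b - (a - b))
    rwa [(hb.sub hD).star_eq] at this
  have s2 : (a - b) * (a - b) ≤ ((2 * ε) ^ 2) • (1 + b * b) := by
    have e : ((2 * ε) ^ 2) • (1 + b * b) - (a - b) * (a - b)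
        = (2 : ℝ) • ((ε ^ 2) • (1 + a * a) - (a - b) * (a - b))
          + (2 * ε ^ 2) • ((1 : A) + (b - (a - b)) * (b - (a - b)))
          + (4 * (1 / 4 - ε ^ 2)) • ((a - b) * (a - b)) := by
      simp only [mul_sub, sub_mul]
      module
    rw [← sub_nonneg, e]
    refine add_nonneg (add_nonneg (smul_nonneg (by norm_num) (sub_nonneg.2 s1)) ?_) ?_
    · exact smul_nonneg (by positivity) (add_nonneg zero_le_one hbb)
    · exact smul_nonneg (by linarith) hDD
  have aa : 0 ≤ a * a := by
    have := star_mul_self_nonneg a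
    rwa [ha.star_eq] at this
  have s1' : (a - b) * (a - b) ≤ ((2 * ε) ^ 2) • (1 + a * a) :=
    s1.trans (smul_le_smul_of_nonneg_right (by nlinarith) (add_nonneg zero_le_one aa))
  rw [← h.pp] at s1'
  rw [← k.pp] at s2
  have h2ε : 0 ≤ 2 * ε := by linarith
  have := bt_main h k hD h2ε (bt_abs_le h2ε hD h.one_le s1') (bt_abs_le h2ε hD k.one_le s2)
  linarith
end
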